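/- Let n ≥ 1, let a > 1, let c > 0, and let ρ, γ be density matrices (n×n complex positive semidefinite matrices of trace 1) with γ positive definite and ρ ≤ c·γ in the Loewner order. Then the sandwiched Renyi relative entropy satisfies H̃_a(ρ, γ) ≤ log c. -/

import Mathlib

open Matrix ComplexOrder

/-- Apply a real function to a Hermitian matrix via the spectral decomposition
`A = U D U*`: the result is `U (f(D)) U*` where `f` acts on the diagonal. -/
noncomputable def mfun {m : Type*} [Fintype m] [DecidableEq m]
    (f : ℝ → ℝ) (A : Matrix m m ℂ) : Matrix m m ℂ :=
  if hA : A.IsHermitian then hA.cfc f else 0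

/-- Matrix logarithm via spectral decomposition, with the convention `log 0 = 0`
(note `Real.log 0 = 0`). -/
noncomputable def matLog {m : Type*} [Fintype m] [DecidableEq m]
    (A : Matrix m m ℂ) : Matrix m m ℂ :=
  mfun Real.log A

/-- The positive semidefinite square root of a positive semidefinite matrix,
via spectral decomposition. -/
noncomputable def matSqrt {m : Type*} [Fintype m] [DecidableEq m]
    (A : Matrix m m ℂ) : Matrix m m ℂ :=
  mfun Real.sqrt A

/-- Real power of a (positive semidefinite / positive definite) matrix via spectral
decomposition. -/
noncomputable def matRpow {m : Type*} [Fintype m] [DecidableEq m]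
    (t : ℝ) (A : Matrix m m ℂ) : Matrix m m ℂ :=
  mfun (fun u => u ^ t) A

/-- The von Neumann entropy `S(ρ) = -Tr(ρ log ρ)`. -/
noncomputable def vnEntropy {m : Type*} [Fintype m] [DecidableEq m]
    (ρ : Matrix m m ℂ) : ℝ :=
  -(Matrix.trace (ρ * matLog ρ)).re

/-- The quantum relative entropy `H(ρ, γ) = Tr(ρ (log ρ - log γ))`. -/
noncomputable def relEntropy {m : Type*} [Fintype m] [DecidableEq m]
    (ρ γ : Matrix m m ℂ) : ℝ :=
  (Matrix.trace (ρ * (matLog ρ - matLog γ))).re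

/-- The trace norm of a Hermitian matrix: the sum of the absolute values of its
eigenvalues. -/
noncomputable def traceNorm {m : Type*} [Fintype m] [DecidableEq m]
    (A : Matrix m m ℂ) : ℝ :=
  if hA : A.IsHermitian then ∑ i, |hA.eigenvalues i| else 0

/-- A density matrix: positive semidefinite with trace 1. -/
def IsDensity {m : Type*} [Fintype m] [DecidableEq m] (ρ : Matrix m m ℂ) : Prop :=
  ρ.PosSemidef ∧ Matrix.trace ρ = 1

/-- The binary entropy `h(x) = -x log x - (1-x) log (1-x)`. -/
noncomputable def binEntropy (x : ℝ) : ℝ :=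
  -(x * Real.log x) - (1 - x) * Real.log (1 - x)

/-- The Renyi relative entropy `H_a(ρ,γ) = (a-1)⁻¹ log Tr(ρ^a γ^(1-a))`. -/
noncomputable def renyiRel {m : Type*} [Fintype m] [DecidableEq m]
    (a : ℝ) (ρ γ : Matrix m m ℂ) : ℝ :=
  (a - 1)⁻¹ * Real.log (Matrix.trace (matRpow a ρ * matRpow (1 - a) γ)).re

/-- The sandwiched Renyi relative entropy
`H̃_a(ρ,γ) = (a-1)⁻¹ log Tr((γ^((1-a)/(2a)) ρ γ^((1-a)/(2a)))^a)`. -/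
noncomputable def sandRenyiRel {m : Type*} [Fintype m] [DecidableEq m]
    (a : ℝ) (ρ γ : Matrix m m ℂ) : ℝ :=
  (a - 1)⁻¹ * Real.log
    (Matrix.trace (matRpow a
      (matRpow ((1 - a) / (2 * a)) γ * ρ * matRpow ((1 - a) / (2 * a)) γ))).re

/-!
Write `ρ = B Bᴴ`. The matrix inside the trace is `(P B)(P B)ᴴ` with `P = γ ^ ((1 - a) / (2a))`, and
it has the same eigenvalues as `(P B)ᴴ(P B) = Bᴴ γ ^ ((1 - a) / a) B`. Let `v` be a unit
eigenvector of the latter and `w = B v`. As `(1 - a) / a` lies between `-1` and `0`, Hölder's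
inequality for the spectral measure of `γ` at `w` bounds the `a`-th power of the eigenvalue by
`⟨w, w⟩ ⟨w, γ⁻¹ w⟩ ^ (a - 1)`. By Schur complements `B Bᴴ ≤ c γ` means `Bᴴ γ⁻¹ B ≤ c`, so the
last factor is at most `c ^ (a - 1)`; summing `⟨B v, B v⟩` over an eigenbasis gives `Tr ρ`.
-/

section SpectralCalculus

variable {m : Type*} [Fintype m] [DecidableEq m] {A : Matrix m m ℂ}

lemma mfun_eq_cfc (f : ℝ → ℝ) (A : Matrix m m ℂ) : mfun f A = cfc f A := by
  by_cases hA : A.IsHermitian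
  · rw [mfun, dif_pos hA, hA.cfc_eq]
  · rw [mfun, dif_neg hA, cfc_apply_of_not_predicate (p := IsSelfAdjoint) A hA]

lemma mfun_eq_eigenvectorUnitary_mul (hA : A.IsHermitian) (f : ℝ → ℝ) :
    mfun f A = hA.eigenvectorUnitary * diagonal (fun i ↦ (f (hA.eigenvalues i) : ℂ)) *
      (hA.eigenvectorUnitary : Matrix m m ℂ)ᴴ := by
  rw [mfun, dif_pos hA, IsHermitian.cfc, Unitary.conjStarAlgAut_apply]
  rfl

lemma trace_mfun (hA : A.IsHermitian) (f : ℝ → ℝ) :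
    trace (mfun f A) = ((∑ i, f (hA.eigenvalues i) : ℝ) : ℂ) := by
  rw [mfun_eq_eigenvectorUnitary_mul hA, trace_mul_cycle, ← star_eq_conjTranspose,
    Unitary.coe_star_mul_self, one_mul, trace_diagonal, Complex.ofReal_sum]

lemma trace_mfun_mul_conjTranspose_self (f : ℝ → ℝ) (A : Matrix m m ℂ) :
    trace (mfun f (A * Aᴴ)) = trace (mfun f (Aᴴ * A)) := by
  have hl := isHermitian_mul_conjTranspose_self A
  have hr := isHermitian_conjTranspose_mul_self A
  rw [trace_mfun hl, trace_mfun hr,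
    (hl.eigenvalues_eq_eigenvalues_iff hr).2 (charpoly_mul_comm A Aᴴ)]

lemma re_dotProduct_mfun_mulVec (hA : A.IsHermitian) (f : ℝ → ℝ) (v : m → ℂ) :
    (star v ⬝ᵥ mfun f A *ᵥ v).re =
      ∑ i, Complex.normSq (((hA.eigenvectorUnitary : Matrix m m ℂ)ᴴ *ᵥ v) i) *
        f (hA.eigenvalues i) := by
  set U : Matrix m m ℂ := hA.eigenvectorUnitary.val with hU
  have hstar : star v ᵥ* U = star (Uᴴ *ᵥ v) := by
    rw [star_mulVec, conjTranspose_conjTranspose]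
  rw [mfun_eq_eigenvectorUnitary_mul hA, ← hU, ← mulVec_mulVec, ← mulVec_mulVec, dotProduct_mulVec,
    hstar, dotProduct, Complex.re_sum]
  refine Finset.sum_congr rfl fun i _ ↦ ?_
  rw [mulVec_diagonal, mul_left_comm, Pi.star_apply, Complex.star_def,
    ← Complex.normSq_eq_conj_mul_self, mul_comm, ← Complex.ofReal_mul, Complex.ofReal_re]

open scoped MatrixOrder in
lemma posSemidef_matRpow (hA : A.PosSemidef) (t : ℝ) : (matRpow t A).PosSemidef := by
  rw [matRpow, mfun_eq_cfc]
  exact (cfc_nonneg fun u hu ↦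
    Real.rpow_nonneg (spectrum_nonneg_of_nonneg hA.nonneg hu) t).posSemidef

lemma matRpow_mul_matRpow (hA : A.PosDef) (s t : ℝ) :
    matRpow s A * matRpow t A = matRpow (s + t) A := by
  have hfin : (spectrum ℝ A).Finite := A.finite_real_spectrum
  simp only [matRpow, mfun_eq_cfc]
  rw [← cfc_mul (fun u ↦ u ^ s) (fun u ↦ u ^ t) A (hfin.continuousOn _) (hfin.continuousOn _)]
  refine cfc_congr fun u hu ↦ (Real.rpow_add ?_ s t).symm
  obtain ⟨i, rfl⟩ := hA.isHermitian.spectrum_real_eq_range_eigenvalues ▸ hu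
  exact hA.eigenvalues_pos i

lemma matRpow_zero (hA : A.IsHermitian) : matRpow 0 A = 1 := by
  simp only [matRpow, mfun_eq_cfc, Real.rpow_zero]
  exact cfc_const_one ℝ A hA

lemma matRpow_one (hA : A.IsHermitian) : matRpow 1 A = A := by
  simp only [matRpow, mfun_eq_cfc, Real.rpow_one]
  exact cfc_id' ℝ A hA

lemma matRpow_neg_mul_matRpow (hA : A.PosDef) (t : ℝ) : matRpow (-t) A * matRpow t A = 1 := by
  rw [matRpow_mul_matRpow hA, neg_add_cancel, matRpow_zero hA.isHermitian]

lemma matRpow_neg_one (hA : A.PosDef) : matRpow (-1) A = A⁻¹ := by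
  refine (inv_eq_left_inv ?_).symm
  simpa only [matRpow_one hA.isHermitian] using matRpow_neg_mul_matRpow hA 1

lemma isUnit_matRpow (hA : A.PosDef) (t : ℝ) : IsUnit (matRpow t A) :=
  .of_mul_eq_one_right _ (matRpow_neg_mul_matRpow hA t)

lemma re_trace_matRpow_pos (hA : A.PosSemidef) (hA₀ : A ≠ 0) (t : ℝ) :
    0 < (trace (matRpow t A)).re := by
  obtain ⟨i, hi⟩ := Function.ne_iff.1 (hA.isHermitian.eigenvalues_eq_zero_iff.not.2 hA₀)
  rw [matRpow, trace_mfun hA.isHermitian, Complex.ofReal_re]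
  exact Finset.sum_pos' (fun j _ ↦ Real.rpow_nonneg (hA.eigenvalues_nonneg j) t)
    ⟨i, Finset.mem_univ i, Real.rpow_pos_of_pos ((hA.eigenvalues_nonneg i).lt_of_ne' hi) t⟩

end SpectralCalculus

section QuadraticForm

variable {m k : Type*} [Fintype m] [Fintype k]

lemma star_dotProduct_conjTranspose_mul_mul_mulVec (B : Matrix m k ℂ) (M : Matrix m m ℂ)
    (v : k → ℂ) : star v ⬝ᵥ (Bᴴ * M * B) *ᵥ v = star (B *ᵥ v) ⬝ᵥ M *ᵥ (B *ᵥ v) := by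
  rw [star_mulVec, ← dotProduct_mulVec, mulVec_mulVec, mulVec_mulVec]

variable [DecidableEq m]

lemma sum_star_eigenvectorBasis_dotProduct_mulVec {A : Matrix m m ℂ} (hA : A.IsHermitian)
    (M : Matrix m m ℂ) :
    ∑ i, star ⇑(hA.eigenvectorBasis i) ⬝ᵥ M *ᵥ ⇑(hA.eigenvectorBasis i) = trace M := by
  let U : Matrix m m ℂ := hA.eigenvectorUnitary.val
  calc ∑ i, star ⇑(hA.eigenvectorBasis i) ⬝ᵥ M *ᵥ ⇑(hA.eigenvectorBasis i)
      = trace (Uᴴ * (M * U)) := rfl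
    _ = trace M := by
      rw [trace_mul_comm, Matrix.mul_assoc, ← star_eq_conjTranspose,
        Unitary.mul_star_self_of_mem hA.eigenvectorUnitary.2, Matrix.mul_one]

lemma re_dotProduct_matRpow_mulVec_le {A : Matrix m m ℂ} (hA : A.PosSemidef) {p : ℝ} (hp : 1 ≤ p)
    (s : ℝ) (v : m → ℂ) :
    (star v ⬝ᵥ matRpow s A *ᵥ v).re ≤
      (star v ⬝ᵥ v).re ^ (1 - p⁻¹) * (star v ⬝ᵥ matRpow (s * p) A *ᵥ v).re ^ p⁻¹ := by
  have hone : star v ⬝ᵥ v = star v ⬝ᵥ matRpow 0 A *ᵥ v := by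
    rw [matRpow_zero hA.isHermitian, one_mulVec]
  simp only [hone, matRpow, re_dotProduct_mfun_mulVec hA.isHermitian, Real.rpow_zero, mul_one,
    Real.rpow_mul (hA.eigenvalues_nonneg _)]
  exact Real.inner_le_weight_mul_Lp_of_nonneg _ hp _ _ (fun _ ↦ Complex.normSq_nonneg _)
    fun i ↦ Real.rpow_nonneg (hA.eigenvalues_nonneg i) s

lemma re_dotProduct_matRpow_mulVec_rpow_le {A : Matrix m m ℂ} (hA : A.PosDef) {a : ℝ}
    (ha : 1 < a) (v : m → ℂ) :
    (star v ⬝ᵥ matRpow ((1 - a) / a) A *ᵥ v).re ^ a ≤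
      (star v ⬝ᵥ v).re * (star v ⬝ᵥ A⁻¹ *ᵥ v).re ^ (a - 1) := by
  have ha₀ : 0 < a := by linarith
  have ha₁ : 0 < a - 1 := by linarith
  have hp : 1 ≤ a / (a - 1) := (one_le_div ha₁).2 (by linarith)
  have hexp : (1 - a) / a * (a / (a - 1)) = -1 := by field_simp; ring
  have hpinv : (a / (a - 1))⁻¹ * a = a - 1 := by field_simp
  have hpinv' : (1 - (a / (a - 1))⁻¹) * a = 1 := by rw [sub_mul, hpinv]; ring
  have hpow : 0 ≤ (star v ⬝ᵥ matRpow ((1 - a) / a) A *ᵥ v).re :=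
    (posSemidef_matRpow hA.posSemidef _).re_dotProduct_nonneg v
  have hinv : 0 ≤ (star v ⬝ᵥ A⁻¹ *ᵥ v).re := hA.inv.posSemidef.re_dotProduct_nonneg v
  have hself : 0 ≤ (star v ⬝ᵥ v).re := (Complex.le_def.1 (dotProduct_star_self_nonneg v)).1
  have holder := re_dotProduct_matRpow_mulVec_le hA.posSemidef hp ((1 - a) / a) v
  rw [hexp, matRpow_neg_one hA] at holder
  refine (Real.rpow_le_rpow hpow holder ha₀.le).trans_eq ?_
  rw [Real.mul_rpow (by positivity) (by positivity), ← Real.rpow_mul hself, ← Real.rpow_mul hinv,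
    hpinv, hpinv', Real.rpow_one]

end QuadraticForm

section SchurComplement

variable {m k : Type*} [Fintype m] [Fintype k] [DecidableEq m]

lemma posSemidef_sub_conjTranspose_mul_inv_mul_iff [DecidableEq k] {A : Matrix m m ℂ}
    {D : Matrix k k ℂ} (hA : A.PosDef) (hD : D.PosDef) (B : Matrix m k ℂ) :
    (D - Bᴴ * A⁻¹ * B).PosSemidef ↔ (A - B * D⁻¹ * Bᴴ).PosSemidef := by
  have := hA.isUnit.invertible
  have := hD.isUnit.invertible
  rw [← PosDef.fromBlocks₁₁ B D hA, PosDef.fromBlocks₂₂ A B hD]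

lemma posSemidef_smul_one_sub_conjTranspose_mul_inv_mul [DecidableEq k] {A : Matrix m m ℂ}
    {B : Matrix m k ℂ} {c : ℝ} (hA : A.PosDef) (hc : 0 < c) (hle : (c • A - B * Bᴴ).PosSemidef) :
    (c • (1 : Matrix k k ℂ) - Bᴴ * A⁻¹ * B).PosSemidef := by
  have hone : (c • (1 : Matrix k k ℂ)).PosDef := PosDef.one.smul hc
  have hinv : (c • (1 : Matrix k k ℂ))⁻¹ = c⁻¹ • (1 : Matrix k k ℂ) :=
    inv_eq_left_inv (by simp [smul_smul, hc.ne'])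
  have hscaled : c⁻¹ • (c • A - B * Bᴴ) = A - B * (c • (1 : Matrix k k ℂ))⁻¹ * Bᴴ := by
    rw [smul_sub, inv_smul_smul₀ hc.ne', hinv, Matrix.mul_smul, Matrix.mul_one, Matrix.smul_mul]
  rw [posSemidef_sub_conjTranspose_mul_inv_mul_iff hA hone, ← hscaled]
  exact hle.smul (inv_nonneg.2 hc.le)

lemma re_dotProduct_inv_mulVec_le {A : Matrix m m ℂ} {B : Matrix m k ℂ} {c : ℝ} (hA : A.PosDef)
    (hc : 0 < c) (hle : (c • A - B * Bᴴ).PosSemidef) (v : k → ℂ) :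
    (star (B *ᵥ v) ⬝ᵥ A⁻¹ *ᵥ (B *ᵥ v)).re ≤ c * (star v ⬝ᵥ v).re := by
  classical
  have hpsd := (posSemidef_smul_one_sub_conjTranspose_mul_inv_mul hA hc hle).re_dotProduct_nonneg v
  rw [sub_mulVec, dotProduct_sub, star_dotProduct_conjTranspose_mul_mul_mulVec, smul_mulVec,
    one_mulVec, dotProduct_smul] at hpsd
  simpa using hpsd

end SchurComplement

section SandwichedRenyi

variable {m : Type*} [Fintype m] [DecidableEq m] {γ : Matrix m m ℂ} {a c : ℝ}

lemma re_trace_matRpow_conjTranspose_mul_mul_le {k : Type*} [Fintype k] [DecidableEq k]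
    {B : Matrix m k ℂ} (ha : 1 < a) (hc : 0 < c) (hγ : γ.PosDef)
    (hle : (c • γ - B * Bᴴ).PosSemidef) :
    (trace (matRpow a (Bᴴ * matRpow ((1 - a) / a) γ * B))).re ≤
      c ^ (a - 1) * (trace (Bᴴ * B)).re := by
  set Y := Bᴴ * matRpow ((1 - a) / a) γ * B
  have hY : Y.IsHermitian :=
    ((posSemidef_matRpow hγ.posSemidef _).conjTranspose_mul_mul_same B).isHermitian
  set v : k → k → ℂ := fun i ↦ ⇑(hY.eigenvectorBasis i) with hv
  have hunit (i : k) : star (v i) ⬝ᵥ v i = 1 := by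
    rw [dotProduct_comm, hv, ← EuclideanSpace.inner_eq_star_dotProduct,
      inner_self_eq_norm_sq_to_K, hY.eigenvectorBasis.norm_eq_one]
    simp
  have hinv (i : k) : (star (B *ᵥ v i) ⬝ᵥ γ⁻¹ *ᵥ (B *ᵥ v i)).re ≤ c := by
    simpa [hunit] using re_dotProduct_inv_mulVec_le hγ hc hle (v i)
  have heig (i : k) : hY.eigenvalues i ^ a ≤
      c ^ (a - 1) * (star (v i) ⬝ᵥ (Bᴴ * B) *ᵥ v i).re := by
    have hnorm : star (v i) ⬝ᵥ (Bᴴ * B) *ᵥ v i = star (B *ᵥ v i) ⬝ᵥ (B *ᵥ v i) := by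
      simpa using star_dotProduct_conjTranspose_mul_mul_mulVec B 1 (v i)
    rw [hY.eigenvalues_eq, star_dotProduct_conjTranspose_mul_mul_mulVec, hnorm, mul_comm]
    refine (re_dotProduct_matRpow_mulVec_rpow_le hγ ha _).trans ?_
    refine mul_le_mul_of_nonneg_left (Real.rpow_le_rpow ?_ (hinv i) (by linarith)) ?_
    · exact hγ.inv.posSemidef.re_dotProduct_nonneg _
    · exact (Complex.le_def.1 (dotProduct_star_self_nonneg _)).1
  rw [matRpow, trace_mfun hY, Complex.ofReal_re,
    ← sum_star_eigenvectorBasis_dotProduct_mulVec hY, Complex.re_sum, Finset.mul_sum]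
  exact Finset.sum_le_sum fun i _ ↦ heig i

open scoped MatrixOrder in
lemma re_trace_matRpow_sandwich_le {ρ : Matrix m m ℂ} (ha : 1 < a) (hc : 0 < c)
    (hρ : ρ.PosSemidef) (hγ : γ.PosDef) (hle : (c • γ - ρ).PosSemidef) :
    (trace (matRpow a
      (matRpow ((1 - a) / (2 * a)) γ * ρ * matRpow ((1 - a) / (2 * a)) γ))).re ≤
      c ^ (a - 1) * (trace ρ).re := by
  obtain ⟨B, rfl⟩ : ∃ B, ρ = B * Bᴴ := CStarAlgebra.nonneg_iff_eq_mul_star_self.1 hρ.nonneg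
  set P := matRpow ((1 - a) / (2 * a)) γ
  have hP : Pᴴ = P := (posSemidef_matRpow hγ.posSemidef _).isHermitian
  have hPP : P * P = matRpow ((1 - a) / a) γ := by
    rw [matRpow_mul_matRpow hγ]
    congr 1
    field_simp
    ring
  have hleft : P * (B * Bᴴ) * P = P * B * (P * B)ᴴ := by
    rw [conjTranspose_mul, hP]
    simp only [Matrix.mul_assoc]
  have hright : (P * B)ᴴ * (P * B) = Bᴴ * matRpow ((1 - a) / a) γ * B := by
    rw [conjTranspose_mul, hP, ← hPP]
    simp only [Matrix.mul_assoc]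
  rw [hleft, matRpow, trace_mfun_mul_conjTranspose_self, hright, trace_mul_comm B]
  exact re_trace_matRpow_conjTranspose_mul_mul_le ha hc hγ hle

lemma re_trace_matRpow_sandwich_pos {ρ : Matrix m m ℂ} (hρ : ρ.PosSemidef) (hρ₀ : ρ ≠ 0)
    (hγ : γ.PosDef) (s t : ℝ) : 0 < (trace (matRpow t (matRpow s γ * ρ * matRpow s γ))).re := by
  have hP : (matRpow s γ)ᴴ = matRpow s γ := (posSemidef_matRpow hγ.posSemidef s).isHermitian
  refine re_trace_matRpow_pos ?_ ?_ t
  · simpa only [hP] using hρ.mul_mul_conjTranspose_same (matRpow s γ)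
  · rwa [Ne, (isUnit_matRpow hγ s).mul_left_eq_zero, (isUnit_matRpow hγ s).mul_right_eq_zero]

theorem sandRenyi_le_log_of_loewner_general {ρ : Matrix m m ℂ} (ha : 1 < a) (hc : 0 < c)
    (hρ : ρ.PosSemidef) (hρ₀ : ρ ≠ 0) (hγ : γ.PosDef) (hle : (c • γ - ρ).PosSemidef) :
    sandRenyiRel a ρ γ ≤ Real.log c + (a - 1)⁻¹ * Real.log (trace ρ).re := by
  have ha₁ : 0 < a - 1 := by linarith
  have htr : (trace ρ).re ≠ 0 := by
    simpa only [matRpow_one hρ.isHermitian] using (re_trace_matRpow_pos hρ hρ₀ 1).ne'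
  have hlog := Real.log_le_log (re_trace_matRpow_sandwich_pos hρ hρ₀ hγ _ _)
    (re_trace_matRpow_sandwich_le ha hc hρ hγ hle)
  rw [Real.log_mul (by positivity) htr, Real.log_rpow hc] at hlog
  rw [sandRenyiRel, inv_mul_le_iff₀ ha₁, mul_add, mul_inv_cancel_left₀ ha₁.ne']
  exact hlog

end SandwichedRenyi

theorem sandRenyi_le_log_of_loewner (n : ℕ) (hn : 1 ≤ n) (a : ℝ) (ha : 1 < a)
    (c : ℝ) (hc : 0 < c)
    (ρ γ : Matrix (Fin n) (Fin n) ℂ) (hρ : IsDensity ρ) (hγ : IsDensity γ)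
    (hγ' : γ.PosDef) (hle : (c • γ - ρ).PosSemidef) :
    sandRenyiRel a ρ γ ≤ Real.log c := by
  have hρ₀ : ρ ≠ 0 := by rintro rfl; simpa using hρ.2
  simpa [hρ.2] using sandRenyi_le_log_of_loewner_general ha hc hρ.1 hρ₀ hγ' hle
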